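/- Extension of Codd's Theorem: the relational algebra with null values nRA and the domain independent fragment of FOLe with the Standard Name Assumption are equally expressive. That is: (i) for every nRA expression e of arity n and every n-tuple t with values in C ∪ {N} there is a closed safe-range FOLe formula φ_{e,t} such that, for every database instance I with the Standard Name Assumption, t ∈ eval_I(e) iff the FOLe representation of I satisfies φ_{e,t}; and (ii) for every safe-range closed FOLe formula φ there is an nRA expression e_φ such that, for every database instance I with the Standard Name Assumption, the FOLe representation of I satisfies φ iff eval_I(e_φ) ≠ ∅. -/

import Mathlib

/-! ## Syntax of the relational calculus with null values (FOLe) -/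

/-- A relational signature: relation symbols with arities, and constant
symbols. -/
structure Signature where
  Rel : Type
  arity : Rel → ℕ
  Const : Type

/-- Null-free terms (used as arguments of equality atoms, which may not
mention the null symbol). -/
inductive NTerm (σ : Signature) (V : Type) where
  | const : σ.Const → NTerm σ V
  | var : V → NTerm σ V

/-- Terms of FOLe: constants, variables, and the null symbol `N`. -/
inductive Term (σ : Signature) (V : Type) where
  | const : σ.Const → Term σ V
  | var : V → Term σ V
  | null : Term σ V

/-- Formulas of FOLe: atoms `P(t₁,…,tₙ)`, equalities between non-null terms,
and closure under ¬, ∧, ∨, ∃, ∀ (together with the trivial conditions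
true/false). -/
inductive Formula (σ : Signature) (V : Type) where
  | tru : Formula σ V
  | fls : Formula σ V
  | atom : (P : σ.Rel) → (Fin (σ.arity P) → Term σ V) → Formula σ V
  | eq : NTerm σ V → NTerm σ V → Formula σ V
  | not : Formula σ V → Formula σ V
  | and : Formula σ V → Formula σ V → Formula σ V
  | or : Formula σ V → Formula σ V → Formula σ V
  | ex : V → Formula σ V → Formula σ V
  | all : V → Formula σ V → Formula σ V

/-! ## Semantics -/

/-- An FOLe interpretation: a nonempty domain, interpretations of the
constants, and for each `n`-ary relation symbol a set of *partial* `n`-tuples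
(partial functions `{1,…,n} → Δ`, encoded as `Fin n → Option Δ`). -/
structure Interp (σ : Signature) where
  Dom : Type
  nonempty : Nonempty Dom
  constInterp : σ.Const → Dom
  relInterp : (P : σ.Rel) → Set (Fin (σ.arity P) → Option Dom)

variable {σ : Signature} {V : Type}

/-- The (possibly undefined) value of a term under a partial assignment:
`N` and unassigned variables have undefined value. -/
def Term.val (I : Interp σ) (α : V → Option I.Dom) : Term σ V → Option I.Dom
  | .const c => some (I.constInterp c)
  | .var x => α x
  | .null => none

/-- The value of a null-free term. -/
def NTerm.val (I : Interp σ) (α : V → Option I.Dom) : NTerm σ V → Option I.Dom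
  | .const c => some (I.constInterp c)
  | .var x => α x

/-- FOLe satisfaction: an atom holds iff the partial tuple of the defined
term values belongs to the relation's interpretation; equality requires both
values defined and equal; connectives and quantifiers (over the domain) are
classical. -/
def Formula.Sat [DecidableEq V] (I : Interp σ) :
    (V → Option I.Dom) → Formula σ V → Prop
  | _, .tru => True
  | _, .fls => False
  | α, .atom P ts => (fun i => (ts i).val I α) ∈ I.relInterp P
  | α, .eq t₁ t₂ => ∃ d : I.Dom, t₁.val I α = some d ∧ t₂.val I α = some d
  | α, .not φ => ¬ Formula.Sat I α φ
  | α, .and φ ψ => Formula.Sat I α φ ∧ Formula.Sat I α ψ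
  | α, .or φ ψ => Formula.Sat I α φ ∨ Formula.Sat I α ψ
  | α, .ex x φ => ∃ d : I.Dom, Formula.Sat I (fun y => if y = x then some d else α y) φ
  | α, .all x φ => ∀ d : I.Dom, Formula.Sat I (fun y => if y = x then some d else α y) φ

/-! ## Free variables, safe range -/

/-- Variables of a term. -/
def Term.vars [DecidableEq V] : Term σ V → Finset V
  | .var x => {x}
  | _ => ∅

/-- Variables of a null-free term. -/
def NTerm.vars [DecidableEq V] : NTerm σ V → Finset V
  | .var x => {x}
  | _ => ∅

/-- Free variables of a formula. -/
def Formula.freeVars [DecidableEq V] : Formula σ V → Finset V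
  | .tru | .fls => ∅
  | .atom _ ts => Finset.univ.biUnion fun i => (ts i).vars
  | .eq t₁ t₂ => t₁.vars ∪ t₂.vars
  | .not φ => φ.freeVars
  | .and φ ψ | .or φ ψ => φ.freeVars ∪ ψ.freeVars
  | .ex x φ | .all x φ => φ.freeVars.erase x

/-- The range restriction of a formula (`none` = undefined), computed by the
standard syntactic rules. -/
def Formula.rr [DecidableEq V] : Formula σ V → Option (Finset V)
  | .tru | .fls => some ∅
  | .atom _ ts => some (Finset.univ.biUnion fun i => (ts i).vars)
  | .eq (.var x) (.const _) => some {x}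
  | .eq (.const _) (.var y) => some {y}
  | .eq _ _ => some ∅
  | .not φ => φ.rr.map fun _ => ∅
  | .and φ ψ => do pure ((← φ.rr) ∪ (← ψ.rr))
  | .or φ ψ => do pure ((← φ.rr) ∩ (← ψ.rr))
  | .ex x φ => φ.rr.bind fun s => if x ∈ s then some (s.erase x) else none
  | .all _ _ => none

/-- A formula is safe-range if its range restriction is defined and equals its
set of free variables. -/
def Formula.SafeRange [DecidableEq V] (φ : Formula σ V) : Prop :=
  φ.rr = some φ.freeVars

/-- A formula is null-free if the null symbol `N` does not occur in it. -/
def Term.NullFree : Term σ V → Prop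
  | .null => False
  | _ => True

def Formula.NullFree : Formula σ V → Prop
  | .atom _ ts => ∀ i, (ts i).NullFree
  | .not φ => φ.NullFree
  | .and φ ψ | .or φ ψ => φ.NullFree ∧ ψ.NullFree
  | .ex _ φ | .all _ φ => φ.NullFree
  | _ => True


/-! ## The relational algebra with null values (nRA) -/

/-- Expressions of the relational algebra with null values nRA, over a
database schema (`Rel`, `ar`) and a set `C` of constants, indexed by their
arity.  Tuples take values in `C ∪ {N}`, encoded as `Option C` with `none`
playing the role of the null value `N`. -/
inductive RA (Rel : Type) (ar : Rel → ℕ) (C : Type) : ℕ → Type where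
  | rel : (R : Rel) → RA Rel ar C (ar R)
  | csing : C → RA Rel ar C 1
  | nsing : RA Rel ar C 1
  | selc : {n : ℕ} → Fin n → C → RA Rel ar C n → RA Rel ar C n
  | sel : {n : ℕ} → Fin n → Fin n → RA Rel ar C n → RA Rel ar C n
  | proj : {n k : ℕ} → (Fin k → Fin n) → RA Rel ar C n → RA Rel ar C k
  | prod : {n m : ℕ} → RA Rel ar C n → RA Rel ar C m → RA Rel ar C (n + m)
  | union : {n : ℕ} → RA Rel ar C n → RA Rel ar C n → RA Rel ar C n
  | diff : {n : ℕ} → RA Rel ar C n → RA Rel ar C n → RA Rel ar C n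

/-- A database instance: each `n`-ary relation symbol gets a set of
`n`-tuples over `C ∪ {N}`. -/
def Inst (Rel : Type) (ar : Rel → ℕ) (C : Type) :=
  (R : Rel) → Set (Fin (ar R) → Option C)

/-- Evaluation of nRA expressions.  Both selections succeed only on non-null
values. -/
def RA.eval {Rel : Type} {ar : Rel → ℕ} {C : Type} (I : Inst Rel ar C) :
    {n : ℕ} → RA Rel ar C n → Set (Fin n → Option C)
  | _, .rel R => I R
  | _, .csing v => {fun _ => some v}
  | _, .nsing => {fun _ => none}
  | _, .selc i v e => {s | s ∈ RA.eval I e ∧ s i = some v}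
  | _, .sel i j e => {s | s ∈ RA.eval I e ∧ ∃ d : C, s i = some d ∧ s j = some d}
  | _, .proj p e => {s | ∃ s' ∈ RA.eval I e, ∀ j, s j = s' (p j)}
  | _, .prod e₁ e₂ =>
      {s | ∃ t ∈ RA.eval I e₁, ∃ t' ∈ RA.eval I e₂, s = Fin.append t t'}
  | _, .union e₁ e₂ => RA.eval I e₁ ∪ RA.eval I e₂
  | _, .diff e₁ e₂ => RA.eval I e₁ \ RA.eval I e₂

/-! ## The FOLe representation of a database instance -/

/-- The FOLe signature of a database schema: the relation symbols with their
arities and the constants `C` (the standard names). -/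
def folSig (Rel : Type) (ar : Rel → ℕ) (C : Type) : Signature := ⟨Rel, ar, C⟩

/-- The FOLe representation of a database instance, with the Standard Name
Assumption: the domain is `C`, every constant is interpreted as itself, and
each relation is interpreted as the set of partial tuples obtained from its
tuples by making them undefined exactly at their null positions. -/
def folRep {Rel : Type} {ar : Rel → ℕ} {C : Type} [Nonempty C]
    (I : Inst Rel ar C) : Interp (folSig Rel ar C) where
  Dom := C
  nonempty := inferInstance
  constInterp := id
  relInterp := fun R => I R

/-! ## The translation Ω from nRA to FOLe -/

/-- Equality between two terms, or `false` when one of them is null. -/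
def mkEq {σ : Signature} {V : Type} : Term σ V → Term σ V → Formula σ V
  | .null, _ => .fls
  | _, .null => .fls
  | .var x, .var y => .eq (.var x) (.var y)
  | .var x, .const c => .eq (.var x) (.const c)
  | .const c, .var y => .eq (.const c) (.var y)
  | .const c, .const d => .eq (.const c) (.const d)

/-- Finite disjunction (empty = false, singleton = the formula itself). -/
def bigOr {σ : Signature} {V : Type} : List (Formula σ V) → Formula σ V
  | [] => .fls
  | [φ] => φ
  | φ :: rest => .or φ (bigOr rest)

/-- The translation `Ω(e,t)` of an nRA expression `e` with respect to a tuple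
`t` of terms, with `c` a counter supplying fresh variables (all variables
`≥ c` are fresh). -/
noncomputable def omega {Rel : Type} {ar : Rel → ℕ} {C : Type} :
    {n : ℕ} → RA Rel ar C n → ℕ → (Fin n → Term (folSig Rel ar C) ℕ) →
      Formula (folSig Rel ar C) ℕ
  | _, .rel R, _, t => .atom R t
  | _, .csing v, _, t => mkEq (t 0) (.const v)
  | _, .nsing, _, t =>
      match t 0 with
      | .null => .tru
      | _ => .fls
  | _, .selc i v e, c, t =>
      match t i with
      | .null => .fls
      | _ => .and (omega e c t) (mkEq (t i) (.const v))
  | _, .sel i j e, c, t =>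
      match t i, t j with
      | .null, _ => .fls
      | _, .null => .fls
      | _, _ => .and (omega e c t) (mkEq (t i) (t j))
  | _, .proj (n := n') p e, c, t =>
      (List.range n').foldr (fun i acc => .ex (c + i) acc)
        (bigOr ((Finset.univ \ Finset.image p Finset.univ).powerset.toList.map
          (fun H =>
            omega e (c + n') (fun i =>
              if h : ∃ j, p j = i then t h.choose
              else if i ∈ H then .null
              else .var (c + i.val)))))
  | _, .prod (n := n₁) (m := n₂) e₁ e₂, c, t =>
      .and (omega e₁ c (fun i => t (Fin.castAdd n₂ i)))
           (omega e₂ c (fun i => t (Fin.natAdd n₁ i)))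
  | _, .union e₁ e₂, c, t => .or (omega e₁ c t) (omega e₂ c t)
  | _, .diff e₁ e₂, c, t => .and (omega e₁ c t) (.not (omega e₂ c t))


/-- View a database value (element of `C ∪ {N}`) as a ground FOLe term. -/
def toTerm {Rel : Type} {ar : Rel → ℕ} {C : Type} (o : Option C) :
    Term (folSig Rel ar C) ℕ :=
  o.elim Term.null (fun v => Term.const (σ := folSig Rel ar C) v)

/-!
From the algebra to the calculus, membership of a tuple of terms in the value of an expression is
translated by recursion on the expression. Only projections are difficult: a projected-away
coordinate ranges over `C ∪ {N}` whereas quantifiers range over `C`, so `∃ d` becomes the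
disjunction of the formula with `N` in that place and the formula with a fresh quantified variable
there. The formula `Ω(e,t)` is not a suitable witness: its translation of a projection quantifies
all projected-away coordinates in front of a disjunction whose members need not contain these
variables, so that its range restriction may be undefined. Here the coordinates are eliminated one
at a time, which keeps the free variables and the range restriction of both disjuncts equal.

From the calculus to the algebra, every value that makes a formula true for one of its range
restricted variables lies in the active domain of the formula, which is the value of a unary
expression. The null-free satisfying assignments with values in the active domain are therefore
definable by recursion on the formula, negation being the complement in a power of this domain.
-/

section Congruence

variable [DecidableEq V] (J : Interp σ) {α β : V → Option J.Dom}

theorem Term.val_congr {u : Term σ V} (h : ∀ x ∈ u.vars, α x = β x) : u.val J α = u.val J β := by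
  cases u with
  | var x => exact h x (Finset.mem_singleton_self x)
  | const c => rfl
  | null => rfl

theorem NTerm.val_congr {u : NTerm σ V} (h : ∀ x ∈ u.vars, α x = β x) :
    u.val J α = u.val J β := by
  cases u with
  | var x => exact h x (Finset.mem_singleton_self x)
  | const c => rfl

theorem Formula.sat_congr {φ : Formula σ V} (h : ∀ x ∈ φ.freeVars, α x = β x) :
    φ.Sat J α ↔ φ.Sat J β := by
  have agree_update {ψ : Formula σ V} {x : V} {α β : V → Option J.Dom}
      (h : ∀ y ∈ ψ.freeVars.erase x, α y = β y) (d : J.Dom) : ∀ y ∈ ψ.freeVars,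
        (if y = x then some d else α y) = if y = x then some d else β y := by
    intro y hy
    split_ifs with hyx
    · rfl
    · exact h y (Finset.mem_erase.2 ⟨hyx, hy⟩)
  induction φ generalizing α β with
  | tru => rfl
  | fls => rfl
  | atom P ts =>
    have hts : (fun i => (ts i).val J α) = fun i => (ts i).val J β := funext fun i =>
      Term.val_congr J fun x hx => h x (Finset.mem_biUnion.2 ⟨i, Finset.mem_univ i, hx⟩)
    simp only [Sat, hts]
  | eq a b =>
    simp only [Sat, NTerm.val_congr J fun x hx => h x (Finset.mem_union_left b.vars hx),
      NTerm.val_congr J fun x hx => h x (Finset.mem_union_right a.vars hx)]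
  | not φ ih => exact not_congr (ih h)
  | and φ ψ ihφ ihψ =>
    exact and_congr (ihφ fun x hx => h x (Finset.mem_union_left _ hx))
      (ihψ fun x hx => h x (Finset.mem_union_right _ hx))
  | or φ ψ ihφ ihψ =>
    exact or_congr (ihφ fun x hx => h x (Finset.mem_union_left _ hx))
      (ihψ fun x hx => h x (Finset.mem_union_right _ hx))
  | ex x φ ih => exact exists_congr fun d => ih (agree_update h d)
  | all x φ ih => exact forall_congr' fun d => ih (agree_update h d)

theorem Formula.sat_iff_of_freeVars_eq_empty {φ : Formula σ V} (h : φ.freeVars = ∅)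
    (α β : V → Option J.Dom) : φ.Sat J α ↔ φ.Sat J β :=
  Formula.sat_congr J (by simp [h])

end Congruence

theorem sat_mkEq [DecidableEq V] (J : Interp σ) (α : V → Option J.Dom) (a b : Term σ V) :
    (mkEq a b).Sat J α ↔ ∃ d, a.val J α = some d ∧ b.val J α = some d := by
  cases a <;> cases b <;> simp [mkEq, Formula.Sat, Term.val, NTerm.val]

theorem freeVars_mkEq_subset [DecidableEq V] (a b : Term σ V) :
    (mkEq a b).freeVars ⊆ a.vars ∪ b.vars := by
  cases a <;> cases b <;> simp [mkEq, Formula.freeVars, Term.vars, NTerm.vars]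

theorem exists_rr_mkEq_eq_some [DecidableEq V] (a b : Term σ V) :
    ∃ Z ⊆ a.vars ∪ b.vars, (mkEq a b).rr = some Z := by
  cases a <;> cases b <;> simp [mkEq, Formula.rr, Term.vars]

variable {Rel C : Type} {ar : Rel → ℕ}

/-! ### From the algebra to the calculus -/

/-- The value of a term under an assignment of elements of `C` to all variables. Under such
assignments `none` is the value of the null symbol only. -/
def Term.value (α : V → C) : Term (folSig Rel ar C) V → Option C
  | .const c => some c
  | .var x => some (α x)
  | .null => none

theorem Term.val_folRep [Nonempty C] (I : Inst Rel ar C) (α : V → C)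
    (u : Term (folSig Rel ar C) V) : u.val (folRep I) (fun x => some (α x)) = u.value α := by
  cases u <;> rfl

theorem Term.value_congr [DecidableEq V] {α β : V → C} {u : Term (folSig Rel ar C) V}
    (h : ∀ x ∈ u.vars, α x = β x) : u.value α = u.value β := by
  cases u with
  | var x => exact congrArg some (h x (Finset.mem_singleton_self x))
  | const c => rfl
  | null => rfl

/-- The variables of a tuple of terms. -/
def tupleVars [DecidableEq V] {n : ℕ} (t : Fin n → Term σ V) : Finset V :=
  Finset.univ.biUnion fun i => (t i).vars

section TupleVars

variable [DecidableEq V] {m n : ℕ}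

theorem mem_tupleVars {t : Fin n → Term σ V} {x : V} : x ∈ tupleVars t ↔ ∃ i, x ∈ (t i).vars := by
  simp [tupleVars]

theorem vars_subset_tupleVars (t : Fin n → Term σ V) (i : Fin n) : (t i).vars ⊆ tupleVars t :=
  Finset.subset_biUnion_of_mem (fun i => (t i).vars) (Finset.mem_univ i)

theorem tupleVars_snoc (t : Fin n → Term σ V) (u : Term σ V) :
    tupleVars (Fin.snoc t u : Fin (n + 1) → Term σ V) = tupleVars t ∪ u.vars := by
  ext x
  simp [mem_tupleVars, Fin.exists_fin_succ']

theorem tupleVars_fin_add (t : Fin (m + n) → Term σ V) :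
    tupleVars t =
      tupleVars (fun i => t (Fin.castAdd n i)) ∪ tupleVars fun i => t (Fin.natAdd m i) := by
  ext x
  have := Fin.forall_fin_add fun i => x ∉ (t i).vars
  simp only [Finset.mem_union, mem_tupleVars]
  grind

theorem tupleVars_union_tupleVars_update (t : Fin n → Term σ V) (i : Fin n) (u : Term σ V) :
    tupleVars t ∪ tupleVars (Function.update t i u) = tupleVars t ∪ u.vars := by
  ext x
  simp only [Finset.mem_union, mem_tupleVars]
  constructor
  · rintro (ht | ⟨j, hj⟩)
    · exact .inl ht
    · rcases eq_or_ne j i with rfl | hji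
      · exact .inr (by rwa [Function.update_self] at hj)
      · exact .inl ⟨j, by rwa [Function.update_of_ne hji] at hj⟩
  · rintro (ht | hu)
    · exact .inl ht
    · exact .inr ⟨i, by rwa [Function.update_self]⟩

end TupleVars

/-- A property `Q` of instances and assignments is safely definable with variables `X` if some
safe-range formula with free variables exactly `X` expresses it. -/
def SafelyDefinable [Nonempty C] [DecidableEq V] (X : Finset V)
    (Q : Inst Rel ar C → (V → C) → Prop) : Prop :=
  ∃ φ : Formula (folSig Rel ar C) V, φ.freeVars = X ∧ φ.SafeRange ∧
    ∀ I α, φ.Sat (folRep I) (fun x => some (α x)) ↔ Q I α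

namespace SafelyDefinable

variable [Nonempty C] [DecidableEq V] {X Y : Finset V} {Q R : Inst Rel ar C → (V → C) → Prop}

theorem congr (h : SafelyDefinable X Q) (hX : X = Y) (hQ : ∀ I α, Q I α ↔ R I α) :
    SafelyDefinable Y R := by
  obtain ⟨φ, hfree, hsafe, hsat⟩ := h
  exact ⟨φ, hfree.trans hX, hsafe, fun I α => (hsat I α).trans (hQ I α)⟩

theorem and (hQ : SafelyDefinable X Q) (hR : SafelyDefinable Y R) :
    SafelyDefinable (X ∪ Y) fun I α => Q I α ∧ R I α := by
  obtain ⟨φ, rfl, hφ, hφQ⟩ := hQ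
  obtain ⟨ψ, rfl, hψ, hψR⟩ := hR
  refine ⟨φ.and ψ, rfl, ?_, fun I α => and_congr (hφQ I α) (hψR I α)⟩
  rw [Formula.SafeRange] at hφ hψ
  simp [Formula.SafeRange, Formula.rr, Formula.freeVars, hφ, hψ]

theorem or (hQ : SafelyDefinable X Q) (hR : SafelyDefinable X R) :
    SafelyDefinable X fun I α => Q I α ∨ R I α := by
  obtain ⟨φ, rfl, hφ, hφQ⟩ := hQ
  obtain ⟨ψ, hfree, hψ, hψR⟩ := hR
  refine ⟨φ.or ψ, by simp [Formula.freeVars, hfree], ?_, fun I α => or_congr (hφQ I α) (hψR I α)⟩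
  rw [Formula.SafeRange] at hφ hψ
  simp [Formula.SafeRange, Formula.rr, Formula.freeVars, hφ, hψ, hfree]

theorem and_sat (hQ : SafelyDefinable X Q) {ψ : Formula (folSig Rel ar C) V} {Z : Finset V}
    (hfree : ψ.freeVars ⊆ X) (hrr : ψ.rr = some Z) (hZ : Z ⊆ X) :
    SafelyDefinable X fun I α => Q I α ∧ ψ.Sat (folRep I) (fun x => some (α x)) := by
  obtain ⟨φ, rfl, hφ, hφQ⟩ := hQ
  have hunion : (φ.and ψ).freeVars = φ.freeVars := Finset.union_eq_left.2 hfree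
  refine ⟨φ.and ψ, hunion, ?_, fun I α => and_congr_left' (hφQ I α)⟩
  rw [Formula.SafeRange] at hφ
  simp [Formula.SafeRange, Formula.rr, hφ, hrr, hunion, hZ]

theorem diff (hQ : SafelyDefinable X Q) (hR : SafelyDefinable X R) :
    SafelyDefinable X fun I α => Q I α ∧ ¬ R I α := by
  obtain ⟨ψ, hfree, hψ, hψR⟩ := hR
  have hrr : ψ.not.rr = some ∅ := by
    rw [Formula.SafeRange] at hψ
    simp [Formula.rr, hψ]
  exact (hQ.and_sat (ψ := ψ.not) hfree.subset hrr (Finset.empty_subset X)).congr rfl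
    fun I α => and_congr_right' (not_congr (hψR I α))

theorem const_true : SafelyDefinable ∅ fun (_ : Inst Rel ar C) (_ : V → C) => True :=
  ⟨.tru, rfl, rfl, fun _ _ => Iff.rfl⟩

theorem value_eq_some (u : Term (folSig Rel ar C) V) (c : C) :
    SafelyDefinable u.vars fun (_ : Inst Rel ar C) α => u.value α = some c := by
  refine ⟨mkEq u (.const c), ?_, ?_, fun I α => ?_⟩
  · cases u <;> simp [mkEq, Formula.freeVars, Term.vars, NTerm.vars]
  · cases u <;> simp [mkEq, Formula.SafeRange, Formula.rr, Formula.freeVars, NTerm.vars]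
  · rw [sat_mkEq, Term.val_folRep]
    exact ⟨fun ⟨d, hu, hc⟩ => hu.trans hc.symm, fun hu => ⟨c, hu, rfl⟩⟩

theorem const_false (X : Finset V) :
    SafelyDefinable X fun (_ : Inst Rel ar C) (_ : V → C) => False := by
  induction X using Finset.induction_on with
  | empty => exact ⟨.fls, rfl, rfl, fun _ _ => Iff.rfl⟩
  | insert x X _ ih =>
    exact ((value_eq_some (.var x) (Classical.arbitrary C)).and ih).congr rfl
      (by simp)

theorem forall_mem {ι : Type*} (s : Finset ι) {X : ι → Finset V}
    {Q : ι → Inst Rel ar C → (V → C) → Prop} (h : ∀ i, SafelyDefinable (X i) (Q i)) :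
    SafelyDefinable (s.biUnion X) fun I α => ∀ i ∈ s, Q i I α := by
  classical
  induction s using Finset.induction_on with
  | empty => exact SafelyDefinable.const_true.congr rfl (by simp)
  | insert i s _ ih => exact ((h i).and ih).congr Finset.biUnion_insert.symm (by simp)

theorem exists_update (hQ : SafelyDefinable X Q) {x : V} (hx : x ∈ X) :
    SafelyDefinable (X.erase x) fun I α => ∃ d, Q I (Function.update α x d) := by
  obtain ⟨φ, rfl, hφ, hφQ⟩ := hQ
  refine ⟨φ.ex x, rfl, ?_, fun I α => exists_congr fun (d : C) => ?_⟩
  · rw [Formula.SafeRange] at hφ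
    simp [Formula.SafeRange, Formula.rr, Formula.freeVars, hφ, hx]
  · rw [← hφQ]
    refine Formula.sat_congr (folRep I) fun y _ => ?_
    exact ((Function.apply_update (fun _ => some) α x d y).trans
      (Function.update_apply ..)).symm

theorem and_value_eq_some (hQ : SafelyDefinable X Q) {a b : Term (folSig Rel ar C) V}
    (ha : a.vars ⊆ X) (hb : b.vars ⊆ X) :
    SafelyDefinable X fun I α => Q I α ∧ ∃ d, a.value α = some d ∧ b.value α = some d := by
  obtain ⟨Z, hZ, hrr⟩ := exists_rr_mkEq_eq_some a b
  have hX := Finset.union_subset ha hb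
  refine (hQ.and_sat ((freeVars_mkEq_subset a b).trans hX) hrr (hZ.trans hX)).congr rfl
    fun I α => and_congr_right' ?_
  rw [sat_mkEq, Term.val_folRep, Term.val_folRep]
  rfl

theorem and_value_eq_none (hQ : SafelyDefinable X Q) (u : Term (folSig Rel ar C) V) :
    SafelyDefinable X fun I α => Q I α ∧ u.value α = none := by
  cases u with
  | null => exact hQ.congr rfl (by simp [Term.value])
  | const c => exact (SafelyDefinable.const_false X).congr rfl (by simp [Term.value])
  | var x => exact (SafelyDefinable.const_false X).congr rfl (by simp [Term.value])

theorem and_value_eq (hQ : SafelyDefinable X Q) {a b : Term (folSig Rel ar C) V}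
    (ha : a.vars ⊆ X) (hb : b.vars ⊆ X) :
    SafelyDefinable X fun I α => Q I α ∧ a.value α = b.value α := by
  refine ((hQ.and_value_eq_some ha hb).or
    ((hQ.and_value_eq_none a).and_value_eq_none b)).congr rfl fun I α => ?_
  cases a.value α <;> cases b.value α <;> simp [eq_comm]

theorem value_eq_none (u : Term (folSig Rel ar C) V) :
    SafelyDefinable u.vars fun (_ : Inst Rel ar C) α => u.value α = none := by
  cases u with
  | null => exact SafelyDefinable.const_true.congr rfl (by simp [Term.value])
  | const c => exact (SafelyDefinable.const_false ∅).congr rfl (by simp [Term.value])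
  | var x => exact (SafelyDefinable.const_false {x}).congr rfl (by simp [Term.value])

end SafelyDefinable

/-- A query is calculus expressible if membership of the tuple denoted by any tuple of terms in
its answer is safely definable with the variables of these terms. Quantifying over all tuples of
terms lets nulls and repeated variables be substituted for the arguments of the query. -/
def CalculusExpressible [Nonempty C] (V : Type) [DecidableEq V] {n : ℕ}
    (Q : Inst Rel ar C → Set (Fin n → Option C)) : Prop :=
  ∀ t : Fin n → Term (folSig Rel ar C) V,
    SafelyDefinable (tupleVars t) fun I α => (fun i => (t i).value α) ∈ Q I

namespace CalculusExpressible

variable [Nonempty C] [DecidableEq V] {m n : ℕ}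

theorem rel (P : Rel) : CalculusExpressible V fun I : Inst Rel ar C => I P := fun t =>
  ⟨Formula.atom (σ := folSig Rel ar C) P t, rfl, rfl, fun I α => by
    simp only [← Term.val_folRep I]; rfl⟩

theorem const (c : C) :
    CalculusExpressible V fun _ : Inst Rel ar C => {fun _ : Fin 1 => some c} := fun t =>
  (SafelyDefinable.value_eq_some (t 0) c).congr (by simp [tupleVars]) (by simp [funext_iff])

theorem null :
    CalculusExpressible V fun _ : Inst Rel ar C => {fun _ : Fin 1 => none} := fun t =>
  (SafelyDefinable.value_eq_none (t 0)).congr (by simp [tupleVars]) (by simp [funext_iff])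

variable {Q R : Inst Rel ar C → Set (Fin n → Option C)}

theorem sep_eq_const (hQ : CalculusExpressible V Q) (i : Fin n) (c : C) :
    CalculusExpressible V fun I => {s | s ∈ Q I ∧ s i = some c} := fun t =>
  ((hQ t).and (SafelyDefinable.value_eq_some (t i) c)).congr
    (Finset.union_eq_left.2 (vars_subset_tupleVars t i)) fun _ _ => Iff.rfl

theorem sep_eq_some (hQ : CalculusExpressible V Q) (i j : Fin n) :
    CalculusExpressible V fun I => {s | s ∈ Q I ∧ ∃ d, s i = some d ∧ s j = some d} := fun t =>
  (hQ t).and_value_eq_some (vars_subset_tupleVars t i) (vars_subset_tupleVars t j)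

theorem prod {R : Inst Rel ar C → Set (Fin m → Option C)} (hQ : CalculusExpressible V Q)
    (hR : CalculusExpressible V R) :
    CalculusExpressible V fun I => {s | ∃ a ∈ Q I, ∃ b ∈ R I, s = Fin.append a b} := fun t =>
  ((hQ _).and (hR _)).congr (tupleVars_fin_add t).symm fun I α => by
    constructor
    · rintro ⟨ha, hb⟩
      exact ⟨_, ha, _, hb,
        (Fin.append_castAdd_natAdd (f := fun i => (t i).value α)).symm⟩
    · rintro ⟨a, ha, b, hb, hab⟩
      simp only [funext_iff, Fin.forall_fin_add, Fin.append_left, Fin.append_right] at hab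
      rw [funext hab.1, funext hab.2]
      exact ⟨ha, hb⟩

/- Two variables may not be range restricted by equating them. So the formula also asserts that
the tuple with `b` in place of its `i`-th entry belongs to the query, which is implied. -/
theorem and_value_eq_apply (hQ : CalculusExpressible V Q) (t : Fin n → Term (folSig Rel ar C) V)
    (i : Fin n) (b : Term (folSig Rel ar C) V) :
    SafelyDefinable (tupleVars t ∪ b.vars) fun I α =>
      (fun i => (t i).value α) ∈ Q I ∧ b.value α = (t i).value α := by
  have hQQ := ((hQ t).and (hQ (Function.update t i b))).congr
    (tupleVars_union_tupleVars_update t i b) fun _ _ => Iff.rfl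
  refine (hQQ.and_value_eq Finset.subset_union_right
    ((vars_subset_tupleVars t i).trans Finset.subset_union_left)).congr rfl fun I α => ?_
  refine and_congr_left fun hb => and_iff_left_of_imp fun ht => ?_
  have hupdate : (fun j => (Function.update t i b j).value α) = fun j => (t j).value α := by
    funext j
    rcases eq_or_ne j i with rfl | hj
    · rw [Function.update_self, hb]
    · rw [Function.update_of_ne hj]
  rwa [hupdate]

theorem graph (hQ : CalculusExpressible V Q) (p : Fin m → Fin n) :
    CalculusExpressible V fun I => {s : Fin (m + n) → Option C |
      (fun i => s (Fin.natAdd m i)) ∈ Q I ∧ ∀ j, s (Fin.castAdd n j) = s (Fin.natAdd m (p j))} := by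
  intro t
  let u : Fin n → Term (folSig Rel ar C) V := fun i => t (Fin.natAdd m i)
  have heqs := SafelyDefinable.forall_mem Finset.univ fun j : Fin m =>
    hQ.and_value_eq_apply u (p j) (t (Fin.castAdd n j))
  refine ((hQ u).and heqs).congr ?_ fun I α => ?_
  · rw [tupleVars_fin_add]
    ext x
    simp only [Finset.mem_union, Finset.mem_biUnion, Finset.mem_univ, true_and, mem_tupleVars, u]
    grind
  · simp only [Finset.mem_univ, true_imp_iff, Set.mem_ofPred_eq, u]
    grind

theorem exists_snoc [Infinite V] {Q : Inst Rel ar C → Set (Fin (n + 1) → Option C)}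
    (hQ : CalculusExpressible V Q) :
    CalculusExpressible V fun I => {s | ∃ d, (Fin.snoc s d : Fin (n + 1) → Option C) ∈ Q I} := by
  intro t
  obtain ⟨y, hy⟩ := Infinite.exists_notMem_finset (tupleVars t)
  have value_snoc (α : V → C) (u : Term (folSig Rel ar C) V) :
      (fun i => ((Fin.snoc t u : Fin (n + 1) → Term (folSig Rel ar C) V) i).value α) =
        Fin.snoc (fun i => (t i).value α) (u.value α) :=
    Fin.comp_snoc (Term.value α) t u
  have value_update (α : V → C) (c : C) :
      (fun i => (t i).value (Function.update α y c)) = fun i => (t i).value α :=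
    funext fun i => Term.value_congr fun x hx => Function.update_of_ne
      (ne_of_mem_of_not_mem (vars_subset_tupleVars t i hx) hy) c α
  have hnull := (hQ (Fin.snoc t .null)).congr (Y := tupleVars t)
    (R := fun I α =>
      (Fin.snoc (fun i => (t i).value α) none : Fin (n + 1) → Option C) ∈ Q I)
    (by simp [tupleVars_snoc, Term.vars]) fun I α => by rw [value_snoc]; rfl
  have hvar : y ∈ tupleVars (Fin.snoc t (.var y) : Fin (n + 1) → Term (folSig Rel ar C) V) := by
    simp [tupleVars_snoc, Term.vars]
  have hsome := ((hQ (Fin.snoc t (.var y))).exists_update hvar).congr (Y := tupleVars t)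
    (R := fun I α =>
      ∃ c, (Fin.snoc (fun i => (t i).value α) (some c) : Fin (n + 1) → Option C) ∈ Q I)
    (by simp [tupleVars_snoc, Term.vars, hy])
    fun I α => exists_congr fun c => by
      rw [value_snoc, value_update, Term.value, Function.update_self]
  exact (hnull.or hsome).congr rfl fun I α => (Option.exists (p := fun d =>
    (Fin.snoc (fun i => (t i).value α) d : Fin (n + 1) → Option C) ∈ Q I)).symm

theorem exists_append [Infinite V] {Q : Inst Rel ar C → Set (Fin (m + n) → Option C)}
    (hQ : CalculusExpressible V Q) :
    CalculusExpressible V fun I => {s | ∃ s' : Fin n → Option C, Fin.append s s' ∈ Q I} := by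
  induction n with
  | zero =>
    have (I : Inst Rel ar C) : {s | ∃ s' : Fin 0 → Option C, Fin.append s s' ∈ Q I} = Q I := by
      ext s
      exact Fin.exists_fin_zero_pi.trans (by rw [Fin.append_right_nil _ _ rfl]; rfl)
    simpa only [this] using hQ
  | succ n ih =>
    have (I : Inst Rel ar C) : {s | ∃ s' : Fin (n + 1) → Option C, Fin.append s s' ∈ Q I} =
        {s | ∃ s' : Fin n → Option C, ∃ d,
          (Fin.snoc (Fin.append s s') d : Fin (m + n + 1) → Option C) ∈ Q I} := by
      ext s
      constructor
      · rintro ⟨s', hs'⟩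
        refine ⟨Fin.init s', s' (Fin.last n), ?_⟩
        rwa [← Fin.append_snoc, Fin.snoc_init_self]
      · rintro ⟨s', d, hs'⟩
        exact ⟨Fin.snoc s' d, by rwa [Fin.append_snoc]⟩
    simp only [this]
    exact ih hQ.exists_snoc

theorem proj [Infinite V] (hQ : CalculusExpressible V Q) (p : Fin m → Fin n) :
    CalculusExpressible V fun I => {s | ∃ s' ∈ Q I, ∀ j, s j = s' (p j)} := by
  simpa only [Set.mem_ofPred_eq, Fin.append_left, Fin.append_right] using
    (hQ.graph p).exists_append

theorem eval [Infinite V] (e : RA Rel ar C n) : CalculusExpressible V fun I => e.eval I := by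
  induction e with
  | rel P => exact rel P
  | csing c => exact const c
  | nsing => exact null
  | selc i c e ih => exact ih.sep_eq_const i c
  | sel i j e ih => exact ih.sep_eq_some i j
  | proj p e ih => exact ih.proj p
  | prod e f ihe ihf => exact ihe.prod ihf
  | union e f ihe ihf => exact fun t => (ihe t).or (ihf t)
  | diff e f ihe ihf => exact fun t => (ihe t).diff (ihf t)

end CalculusExpressible

theorem RA.exists_safeRange_formula [Nonempty C] (V : Type) [DecidableEq V] [Infinite V] {n : ℕ}
    (e : RA Rel ar C n) (t : Fin n → Option C) :
    ∃ φ : Formula (folSig Rel ar C) V, φ.freeVars = ∅ ∧ φ.SafeRange ∧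
      ∀ I : Inst Rel ar C, t ∈ e.eval I ↔ φ.Sat (folRep I) (fun _ => none) := by
  let groundTerm (o : Option C) : Term (folSig Rel ar C) V := 
    o.elim .null fun c => .const (σ := folSig Rel ar C) c
  obtain ⟨φ, hfree, hsafe, hsat⟩ := CalculusExpressible.eval e fun i => groundTerm (t i)
  have vars_groundTerm (o : Option C) : (groundTerm o).vars = ∅ := by cases o <;> rfl
  have value_groundTerm (α : V → C) (o : Option C) : (groundTerm o).value α = o := by
    cases o <;> rfl
  have hclosed : φ.freeVars = ∅ := by
    simp [hfree, Finset.eq_empty_iff_forall_notMem, mem_tupleVars, vars_groundTerm]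
  refine ⟨φ, hclosed, hsafe, fun I => ?_⟩
  simp only [value_groundTerm] at hsat
  rw [← hsat I fun _ => Classical.arbitrary C]
  exact Formula.sat_iff_of_freeVars_eq_empty (folRep I) hclosed _ _

/-! ### From the calculus to the algebra -/

section RangeRestriction

variable [DecidableEq V] {φ ψ : Formula σ V} {Z : Finset V} {x : V}

theorem Formula.rr_not_eq_some : φ.not.rr = some Z ↔ (∃ Z', φ.rr = some Z') ∧ Z = ∅ := by
  simp only [rr, Option.map_eq_some_iff, eq_comm (a := Z), exists_and_right]

theorem Formula.rr_and_eq_some :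
    (φ.and ψ).rr = some Z ↔ ∃ Z₁ Z₂, φ.rr = some Z₁ ∧ ψ.rr = some Z₂ ∧ Z = Z₁ ∪ Z₂ := by
  simp [rr, Option.bind_eq_some_iff, eq_comm (a := Z)]

theorem Formula.rr_or_eq_some :
    (φ.or ψ).rr = some Z ↔ ∃ Z₁ Z₂, φ.rr = some Z₁ ∧ ψ.rr = some Z₂ ∧ Z = Z₁ ∩ Z₂ := by
  simp [rr, Option.bind_eq_some_iff, eq_comm (a := Z)]

theorem Formula.rr_ex_eq_some :
    (φ.ex x).rr = some Z ↔ ∃ Z', φ.rr = some Z' ∧ x ∈ Z' ∧ Z = Z'.erase x := by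
  simp [rr, Option.bind_eq_some_iff, eq_comm (a := Z)]

/-- The elements denoted by constants in a null-free term. -/
def NTerm.constants (J : Interp σ) : NTerm σ V → Set J.Dom
  | .const c => {J.constInterp c}
  | .var _ => ∅

/-- The active domain of a formula: the elements occurring in the relations of its atoms or denoted
by the constants of its equalities. Constants in atoms are not included: they cannot be values of
range restricted variables unless they occur in the relation. -/
def Formula.activeDomain (J : Interp σ) : Formula σ V → Set J.Dom
  | .tru | .fls => ∅
  | .atom P _ => {d | ∃ i, ∃ s ∈ J.relInterp P, s i = some d}
  | .eq a b => a.constants J ∪ b.constants J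
  | .not φ | .ex _ φ | .all _ φ => φ.activeDomain J
  | .and φ ψ | .or φ ψ => φ.activeDomain J ∪ ψ.activeDomain J

theorem Formula.mem_activeDomain_of_rr_eq (J : Interp σ) {α : V → Option J.Dom}
    (hsat : φ.Sat J α) (hrr : φ.rr = some Z) (hx : x ∈ Z) {d : J.Dom} (hd : α x = some d) :
    d ∈ φ.activeDomain J := by
  induction φ generalizing Z α with
  | tru | fls =>
    obtain rfl := Option.some.inj hrr
    exact absurd hx (Finset.notMem_empty x)
  | not φ =>
    obtain ⟨-, rfl⟩ := rr_not_eq_some.1 hrr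
    exact absurd hx (Finset.notMem_empty x)
  | atom P ts =>
    obtain rfl := Option.some.inj hrr
    obtain ⟨i, -, hi⟩ := Finset.mem_biUnion.1 hx
    cases hts : ts i with
    | var y =>
      obtain rfl : x = y := by simpa [hts, Term.vars] using hi
      exact ⟨i, _, hsat, by rw [hts]; exact hd⟩
    | const c => simp [hts, Term.vars] at hi
    | null => simp [hts, Term.vars] at hi
  | eq a b =>
    obtain ⟨c, ha, hb⟩ := hsat
    cases a <;> cases b <;> simp_all [rr, NTerm.val, activeDomain, NTerm.constants] <;> grind
  | and φ ψ ihφ ihψ =>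
    obtain ⟨Z₁, Z₂, hφ, hψ, rfl⟩ := rr_and_eq_some.1 hrr
    exact (Finset.mem_union.1 hx).imp (ihφ hsat.1 hφ · hd) (ihψ hsat.2 hψ · hd)
  | or φ ψ ihφ ihψ =>
    obtain ⟨Z₁, Z₂, hφ, hψ, rfl⟩ := rr_or_eq_some.1 hrr
    obtain ⟨hx₁, hx₂⟩ := Finset.mem_inter.1 hx
    exact hsat.imp (ihφ · hφ hx₁ hd) (ihψ · hψ hx₂ hd)
  | ex y φ ih =>
    obtain ⟨Z', hφ, -, rfl⟩ := rr_ex_eq_some.1 hrr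
    obtain ⟨hxy, hxZ⟩ := Finset.mem_erase.1 hx
    obtain ⟨c, hc⟩ := hsat
    exact ih hc hφ hxZ ((if_neg hxy).trans hd)
  | all y φ => cases hrr

end RangeRestriction

/-- The free and bound variables of a formula. -/
def Formula.allVars [DecidableEq V] : Formula σ V → Finset V
  | .tru | .fls => ∅
  | .atom _ ts => tupleVars ts
  | .eq a b => a.vars ∪ b.vars
  | .not φ => φ.allVars
  | .and φ ψ | .or φ ψ => φ.allVars ∪ ψ.allVars
  | .ex x φ | .all x φ => insert x φ.allVars

/-- The partial assignment that gives the variables `v i` the entries of a tuple and leaves all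
other variables undefined. -/
noncomputable def tupleAssignment {D : Type} {k : ℕ} (v : Fin k → V) (s : Fin k → Option D) :
    V → Option D :=
  Function.extend v s fun _ => none

section TupleAssignment

variable {D : Type} {k : ℕ} {v : Fin k → V}

theorem tupleAssignment_apply (hv : v.Injective) (s : Fin k → Option D) (i : Fin k) :
    tupleAssignment v s (v i) = s i :=
  hv.extend_apply s _ i

theorem tupleAssignment_update [DecidableEq V] (hv : v.Injective) (s : Fin k → Option D) (i : Fin k)
    (o : Option D) :
    tupleAssignment v (Function.update s i o) =
      fun y => if y = v i then o else tupleAssignment v s y := by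
  funext y
  by_cases hy : ∃ j, v j = y
  · obtain ⟨j, rfl⟩ := hy
    simp only [tupleAssignment_apply hv, Function.update_apply, hv.eq_iff]
  · rw [if_neg fun h => hy ⟨i, h.symm⟩, tupleAssignment, tupleAssignment,
      Function.extend_apply' _ _ _ hy, Function.extend_apply' _ _ _ hy]

theorem Formula.sat_ex_tupleAssignment [DecidableEq V] (J : Interp σ) (hv : v.Injective)
    (s : Fin k → Option J.Dom) (i : Fin k) (φ : Formula σ V) :
    (φ.ex (v i)).Sat J (tupleAssignment v s) ↔
      ∃ d, φ.Sat J (tupleAssignment v (Function.update s i (some d))) := by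
  simp only [Sat, tupleAssignment_update hv]

end TupleAssignment

/-- The tuples of length `k` without nulls and with all entries in `A`. -/
def cube (A : Set C) (k : ℕ) : Set (Fin k → Option C) :=
  {s | ∀ i, ∃ c ∈ A, s i = some c}

theorem mem_cube_one {A : Set C} {s : Fin 1 → Option C} : s ∈ cube A 1 ↔ ∃ c ∈ A, s 0 = some c :=
  Fin.forall_fin_one

theorem update_mem_cube {A : Set C} {k : ℕ} {s : Fin k → Option C} (hs : s ∈ cube A k) (i : Fin k)
    {o : Option C} (ho : ∃ c ∈ A, o = some c) : Function.update s i o ∈ cube A k := by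
  intro j
  rcases eq_or_ne j i with rfl | hji
  · rwa [Function.update_self]
  · rw [Function.update_of_ne hji]
    exact hs j

/-- A query is algebra expressible if it is the evaluation of some nRA expression. -/
def AlgebraExpressible {n : ℕ} (Q : Inst Rel ar C → Set (Fin n → Option C)) : Prop :=
  ∃ e : RA Rel ar C n, ∀ I, e.eval I = Q I

namespace AlgebraExpressible

variable {m n k : ℕ} {Q R : Inst Rel ar C → Set (Fin n → Option C)}

theorem congr (hQ : AlgebraExpressible Q) (h : ∀ I, Q I = R I) : AlgebraExpressible R :=
  funext h ▸ hQ

theorem rel (P : Rel) : AlgebraExpressible fun I : Inst Rel ar C => I P :=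
  ⟨.rel P, fun _ => rfl⟩

theorem const (c : C) : AlgebraExpressible fun _ : Inst Rel ar C => {fun _ : Fin 1 => some c} :=
  ⟨.csing c, fun _ => rfl⟩

theorem null : AlgebraExpressible fun _ : Inst Rel ar C => {fun _ : Fin 1 => none} :=
  ⟨.nsing, fun _ => rfl⟩

theorem union (hQ : AlgebraExpressible Q) (hR : AlgebraExpressible R) :
    AlgebraExpressible fun I => Q I ∪ R I := by
  obtain ⟨e, he⟩ := hQ
  obtain ⟨f, hf⟩ := hR
  exact ⟨.union e f, fun I => congrArg₂ _ (he I) (hf I)⟩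

theorem diff (hQ : AlgebraExpressible Q) (hR : AlgebraExpressible R) :
    AlgebraExpressible fun I => Q I \ R I := by
  obtain ⟨e, he⟩ := hQ
  obtain ⟨f, hf⟩ := hR
  exact ⟨.diff e f, fun I => congrArg₂ _ (he I) (hf I)⟩

theorem inter (hQ : AlgebraExpressible Q) (hR : AlgebraExpressible R) :
    AlgebraExpressible fun I => Q I ∩ R I :=
  (hQ.diff (hQ.diff hR)).congr fun _ => Set.sdiff_sdiff_right_self _ _

theorem prod {R : Inst Rel ar C → Set (Fin m → Option C)} (hQ : AlgebraExpressible Q)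
    (hR : AlgebraExpressible R) :
    AlgebraExpressible fun I => {s | ∃ a ∈ Q I, ∃ b ∈ R I, s = Fin.append a b} := by
  obtain ⟨e, he⟩ := hQ
  obtain ⟨f, hf⟩ := hR
  exact ⟨.prod e f, fun I => by simp only [RA.eval, he, hf]⟩

theorem proj (hQ : AlgebraExpressible Q) (p : Fin m → Fin n) :
    AlgebraExpressible fun I => {s | ∃ s' ∈ Q I, ∀ j, s j = s' (p j)} := by
  obtain ⟨e, he⟩ := hQ
  exact ⟨.proj p e, fun I => by simp only [RA.eval, he]⟩

theorem sep_eq_const (hQ : AlgebraExpressible Q) (i : Fin n) (c : C) :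
    AlgebraExpressible fun I => {s ∈ Q I | s i = some c} := by
  obtain ⟨e, he⟩ := hQ
  exact ⟨.selc i c e, fun I => by simp only [RA.eval, he]⟩

theorem sep_eq_some (hQ : AlgebraExpressible Q) (i j : Fin n) :
    AlgebraExpressible fun I => {s ∈ Q I | ∃ d, s i = some d ∧ s j = some d} := by
  obtain ⟨e, he⟩ := hQ
  exact ⟨.sel i j e, fun I => by simp only [RA.eval, he]⟩

theorem sep_eq_none (hQ : AlgebraExpressible Q) (i : Fin n) :
    AlgebraExpressible fun I => {s ∈ Q I | s i = none} := by
  refine (hQ.diff (hQ.sep_eq_some i i)).congr fun I => Set.ext fun s => ?_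
  cases h : s i <;> simp [h]

theorem sep_eq (hQ : AlgebraExpressible Q) (i j : Fin n) :
    AlgebraExpressible fun I => {s ∈ Q I | s i = s j} := by
  refine ((hQ.sep_eq_some i j).union ((hQ.sep_eq_none i).inter (hQ.sep_eq_none j))).congr
    fun I => Set.ext fun s => ?_
  cases hi : s i <;> cases hj : s j <;> simp [hi, hj, eq_comm]

theorem sep_forall_mem {ι : Type*} (S : Finset ι)
    {p : ι → Inst Rel ar C → (Fin n → Option C) → Prop} (hQ : AlgebraExpressible Q)
    (hp : ∀ i {R : Inst Rel ar C → Set (Fin n → Option C)}, AlgebraExpressible R →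
      AlgebraExpressible fun I => {s ∈ R I | p i I s}) :
    AlgebraExpressible fun I => {s ∈ Q I | ∀ i ∈ S, p i I s} := by
  classical
  induction S using Finset.induction_on with
  | empty => simpa using hQ
  | insert i S _ ih =>
    refine (hp i ih).congr fun I => Set.ext fun s => ?_
    simp only [Finset.forall_mem_insert]
    exact and_assoc.trans (and_congr_right' and_comm)

theorem update {R : Inst Rel ar C → Set (Fin 1 → Option C)} (hQ : AlgebraExpressible Q)
    (hR : AlgebraExpressible R) (i : Fin n) :
    AlgebraExpressible fun I => {s | ∃ b ∈ Q I, ∃ c ∈ R I, s = Function.update b i (c 0)} := by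
  refine ((hQ.prod hR).proj (Function.update (Fin.castAdd 1) i (Fin.natAdd n 0))).congr
    fun I => Set.ext fun s => ?_
  have append_update (b : Fin n → Option C) (c : Fin 1 → Option C) (j : Fin n) :
      Fin.append b c (Function.update (Fin.castAdd 1) i (Fin.natAdd n 0) j) =
        Function.update b i (c 0) j := by
    rcases eq_or_ne j i with rfl | hji
    · rw [Function.update_self, Function.update_self, Fin.append_right]
    · rw [Function.update_of_ne hji, Function.update_of_ne hji, Fin.append_left]
  constructor
  · rintro ⟨_, ⟨b, hb, c, hc, rfl⟩, hs⟩
    exact ⟨b, hb, c, hc, funext fun j => (hs j).trans (append_update b c j)⟩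
  · rintro ⟨b, hb, c, hc, rfl⟩
    exact ⟨_, ⟨b, hb, c, hc, rfl⟩, fun j => (append_update b c j).symm⟩

section Cube

variable {A B : Inst Rel ar C → Set C}

theorem cube_empty : AlgebraExpressible fun _ : Inst Rel ar C => cube (∅ : Set C) 1 :=
  (null.diff null).congr fun _ => by ext; simp [mem_cube_one]

theorem cube_singleton (c : C) : AlgebraExpressible fun _ : Inst Rel ar C => cube {c} 1 :=
  (const c).congr fun _ => by ext; simp [mem_cube_one, funext_iff]

theorem cube_union (hA : AlgebraExpressible fun I => cube (A I) 1)
    (hB : AlgebraExpressible fun I => cube (B I) 1) :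
    AlgebraExpressible fun I => cube (A I ∪ B I) 1 :=
  (hA.union hB).congr fun _ => by ext; simp [mem_cube_one, or_and_right, exists_or]

theorem cube_column (hQ : AlgebraExpressible Q) (i : Fin n) :
    AlgebraExpressible fun I => cube {d | ∃ s ∈ Q I, s i = some d} 1 := by
  refine ((hQ.proj fun _ : Fin 1 => i).diff
    ((hQ.proj fun _ : Fin 1 => i).sep_eq_none 0)).congr fun I => Set.ext fun s => ?_
  cases h : s 0 <;> simp [mem_cube_one, h, eq_comm]

theorem cube_columns (hQ : AlgebraExpressible Q) :
    AlgebraExpressible fun I => cube {d | ∃ i, ∃ s ∈ Q I, s i = some d} 1 := by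
  have hS (S : Finset (Fin n)) :
      AlgebraExpressible fun I => cube {d | ∃ i ∈ S, ∃ s ∈ Q I, s i = some d} 1 := by
    induction S using Finset.induction_on with
    | empty => simpa using cube_empty
    | insert i S _ ih =>
      refine ((hQ.cube_column i).cube_union ih).congr fun I => congrArg (cube · 1) ?_
      ext
      simp
  simpa using hS Finset.univ

theorem cube_activeDomain [Nonempty C] (φ : Formula (folSig Rel ar C) V) :
    AlgebraExpressible fun I => cube (φ.activeDomain (folRep I)) 1 := by
  have constants (a : NTerm (folSig Rel ar C) V) :
      AlgebraExpressible fun I : Inst Rel ar C => cube (a.constants (folRep I)) 1 := by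
    cases a with
    | const c => exact cube_singleton c
    | var x => exact cube_empty
  induction φ with
  | tru | fls => exact cube_empty
  | atom P _ => exact (rel P).cube_columns
  | eq a b => exact (constants a).cube_union (constants b)
  | not _ ih | ex _ _ ih | all _ _ ih => exact ih
  | and _ _ ihφ ihψ | or _ _ ihφ ihψ => exact ihφ.cube_union ihψ

theorem cube_pow (hA : AlgebraExpressible fun I => cube (A I) 1) (k : ℕ) :
    AlgebraExpressible fun I => cube (A I) k := by
  induction k with
  | zero => exact (null.proj finZeroElim).congr fun I => by ext; simp [cube]
  | succ k ih =>
    refine (ih.prod hA).congr fun I => Set.ext fun s => ?_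
    constructor
    · rintro ⟨a, ha, b, hb, rfl⟩
      exact (Fin.forall_fin_add _).2 ⟨fun i => by simpa using ha i, fun i => by simpa using hb i⟩
    · intro hs
      exact ⟨_, fun i => hs (Fin.castAdd 1 i), _, fun i => hs (Fin.natAdd k i),
        Fin.append_castAdd_natAdd.symm⟩

end Cube

end AlgebraExpressible

/-- The satisfying assignments of a formula to the variables `v i`, as tuples over `A`. -/
def Formula.answers [Nonempty C] [DecidableEq V] {k : ℕ} (A : Set C) (v : Fin k → V)
    (φ : Formula (folSig Rel ar C) V) (I : Inst Rel ar C) : Set (Fin k → Option C) :=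
  {s ∈ cube A k | φ.Sat (folRep I) (tupleAssignment v s)}

theorem Formula.mem_answers_ex [Nonempty C] [DecidableEq V] {k : ℕ} {A : Set C} {v : Fin k → V}
    (hv : v.Injective) {φ : Formula (folSig Rel ar C) V} {Z : Finset V} {i : Fin k}
    (hrr : φ.rr = some Z) (hi : v i ∈ Z) {I : Inst Rel ar C}
    (hφA : φ.activeDomain (folRep I) ⊆ A) {s : Fin k → Option C} :
    s ∈ (φ.ex (v i)).answers A v I ↔
      s ∈ cube A k ∧ ∃ d ∈ A, Function.update s i (some d) ∈ φ.answers A v I := by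
  have hsat := Formula.sat_ex_tupleAssignment (folRep I) hv s i φ
  constructor
  · rintro ⟨hs, hex⟩
    obtain ⟨d, hd⟩ := hsat.1 hex
    have hdA : d ∈ A := hφA <| mem_activeDomain_of_rr_eq _ hd hrr hi <|
      (tupleAssignment_apply hv _ i).trans (Function.update_self ..)
    exact ⟨hs, d, hdA, update_mem_cube hs i ⟨d, hdA, rfl⟩, hd⟩
  · rintro ⟨hs, d, -, -, hd⟩
    exact ⟨hs, hsat.2 ⟨d, hd⟩⟩

namespace AlgebraExpressible

variable [Nonempty C] [DecidableEq V] {k n : ℕ} {v : Fin k → V} {A : Inst Rel ar C → Set C}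

theorem sep_eq_term {Q : Inst Rel ar C → Set (Fin n → Option C)}
    (hQ : AlgebraExpressible Q) (hv : v.Injective) (p : Fin k → Fin n) (i : Fin n)
    {u : Term (folSig Rel ar C) V} (hu : ∀ x ∈ u.vars, ∃ l, v l = x) :
    AlgebraExpressible fun I =>
      {s ∈ Q I | s i = u.val (folRep I) (tupleAssignment v fun l => s (p l))} := by
  cases u with
  | const c => exact hQ.sep_eq_const i c
  | null => exact hQ.sep_eq_none i
  | var x =>
    obtain ⟨l, rfl⟩ := hu x (Finset.mem_singleton_self x)
    exact (hQ.sep_eq i (p l)).congr fun I => Set.ext fun s => and_congr_right fun _ =>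
      Iff.of_eq (congrArg (s i = ·) (tupleAssignment_apply hv (fun l => s (p l)) l).symm)

theorem answers_atom (hA : AlgebraExpressible fun I => cube (A I) k)
    (hv : v.Injective) (P : Rel) (ts : Fin (ar P) → Term (folSig Rel ar C) V)
    (hts : ∀ x ∈ tupleVars ts, ∃ l, v l = x) :
    AlgebraExpressible fun I =>
      Formula.answers (A I) v (.atom (σ := folSig Rel ar C) P ts) I := by
  have hsep := sep_forall_mem Finset.univ (hA.prod (rel P)) fun (j : Fin (ar P)) _ hR =>
    hR.sep_eq_term hv (Fin.castAdd (ar P)) (Fin.natAdd k j) fun x hx =>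
      hts x (vars_subset_tupleVars ts j hx)
  refine (hsep.proj (Fin.castAdd (ar P))).congr fun I => Set.ext fun s => ?_
  constructor
  · rintro ⟨_, ⟨⟨a, ha, b, hb, rfl⟩, hvals⟩, hs⟩
    simp only [Fin.append_left, Fin.append_right, Finset.mem_univ, true_imp_iff] at hs hvals
    obtain rfl : s = a := funext hs
    obtain rfl := funext hvals
    exact ⟨ha, hb⟩
  · rintro ⟨hs, hP⟩
    refine ⟨_, ⟨⟨s, hs, _, hP, rfl⟩, fun j _ => ?_⟩, fun j => (Fin.append_left ..).symm⟩
    exact (Fin.append_right ..).trans (congrArg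
      (fun w => (ts j).val (folRep I) (tupleAssignment v w))
      (funext fun l => (Fin.append_left ..).symm))

theorem answers_eq (hA : AlgebraExpressible fun I => cube (A I) k)
    (hv : v.Injective) (a b : NTerm (folSig Rel ar C) V)
    (hab : ∀ x ∈ a.vars ∪ b.vars, ∃ l, v l = x) :
    AlgebraExpressible fun I => Formula.answers (A I) v (.eq a b) I := by
  have value_var (s : Fin k → Option C) (l : Fin k) : tupleAssignment v s (v l) = s l :=
    tupleAssignment_apply hv s l
  cases a with
  | const c =>
    cases b with
    | const d =>
      by_cases hcd : c = d
      · exact hA.congr fun I => Set.ext fun s =>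
          (and_iff_left ⟨c, rfl, congrArg some hcd.symm⟩).symm
      · exact (hA.diff hA).congr fun I => Set.sdiff_self.trans
          (Set.eq_empty_of_forall_notMem fun s hs =>
            hcd (hs.2.elim fun _ h => Option.some.inj (h.1.trans h.2.symm))).symm
    | var y =>
      obtain ⟨l, rfl⟩ := hab y (by simp [NTerm.vars])
      exact (hA.sep_eq_const l c).congr fun I => Set.ext fun s => and_congr_right fun _ =>
        ⟨fun h => ⟨c, rfl, (value_var s l).trans h⟩,
          fun ⟨_, hc, hy⟩ => (value_var s l).symm.trans (hy.trans hc.symm)⟩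
  | var x =>
    obtain ⟨l, rfl⟩ := hab x (by simp [NTerm.vars])
    cases b with
    | const c =>
      exact (hA.sep_eq_const l c).congr fun I => Set.ext fun s => and_congr_right fun _ =>
        ⟨fun h => ⟨c, (value_var s l).trans h, rfl⟩,
          fun ⟨_, hx, hc⟩ => (value_var s l).symm.trans (hx.trans hc.symm)⟩
    | var y =>
      obtain ⟨j, rfl⟩ := hab y (by simp [NTerm.vars])
      refine (hA.sep_eq_some l j).congr fun I => Set.ext fun s => and_congr_right fun _ => ?_
      rw [← value_var s l, ← value_var s j]
      rfl

theorem answers_ex {φ : Formula (folSig Rel ar C) V} {Z : Finset V} {i : Fin k}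
    (hφ : AlgebraExpressible fun I => φ.answers (A I) v I)
    (hA : AlgebraExpressible fun I => cube (A I) 1) (hv : v.Injective) (hrr : φ.rr = some Z)
    (hi : v i ∈ Z) (hφA : ∀ I, φ.activeDomain (folRep I) ⊆ A I) :
    AlgebraExpressible fun I => (φ.ex (v i)).answers (A I) v I := by
  refine (hφ.update hA i).congr fun I => Set.ext fun s => ?_
  rw [Formula.mem_answers_ex hv hrr hi (hφA I)]
  constructor
  · rintro ⟨b, hb, c, hc, rfl⟩
    obtain ⟨d, hd, hbd⟩ := hb.1 i
    refine ⟨update_mem_cube hb.1 i (hc 0), d, hd, ?_⟩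
    rwa [Function.update_idem, ← hbd, Function.update_eq_self]
  · rintro ⟨hs, d, -, hd⟩
    refine ⟨_, hd, fun _ => s i, fun _ => hs i, ?_⟩
    rw [Function.update_idem, Function.update_eq_self]

theorem answers (hA : AlgebraExpressible fun I => cube (A I) 1)
    (hv : v.Injective) {φ : Formula (folSig Rel ar C) V} {Z : Finset V} (hrr : φ.rr = some Z)
    (hφA : ∀ I, φ.activeDomain (folRep I) ⊆ A I) (hφv : ∀ x ∈ φ.allVars, ∃ l, v l = x) :
    AlgebraExpressible fun I => φ.answers (A I) v I := by
  have hAk := hA.cube_pow k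
  induction φ generalizing Z with
  | tru => exact hAk.congr fun I => (Set.sep_true).symm
  | fls => exact (hAk.diff hAk).congr fun I => (Set.sdiff_self).trans (Set.sep_false).symm
  | atom P ts => exact hAk.answers_atom hv P ts hφv
  | eq a b => exact hAk.answers_eq hv a b hφv
  | not φ ih =>
    obtain ⟨⟨Z', hφ⟩, -⟩ := Formula.rr_not_eq_some.1 hrr
    exact (hAk.diff (ih hφ hφA hφv)).congr fun I => Set.sdiff_self_inter
  | and φ ψ ihφ ihψ =>
    obtain ⟨Z₁, Z₂, hφ, hψ, -⟩ := Formula.rr_and_eq_some.1 hrr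
    exact ((ihφ hφ (fun I => Set.subset_union_left.trans (hφA I)) fun x hx =>
        hφv x (Finset.mem_union_left _ hx)).inter
      (ihψ hψ (fun I => Set.subset_union_right.trans (hφA I)) fun x hx =>
        hφv x (Finset.mem_union_right _ hx))).congr fun I => Set.sep_and.symm
  | or φ ψ ihφ ihψ =>
    obtain ⟨Z₁, Z₂, hφ, hψ, -⟩ := Formula.rr_or_eq_some.1 hrr
    exact ((ihφ hφ (fun I => Set.subset_union_left.trans (hφA I)) fun x hx =>
        hφv x (Finset.mem_union_left _ hx)).union
      (ihψ hψ (fun I => Set.subset_union_right.trans (hφA I)) fun x hx =>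
        hφv x (Finset.mem_union_right _ hx))).congr fun I => Set.sep_or.symm
  | ex x φ ih =>
    obtain ⟨Z', hφ, hx, -⟩ := Formula.rr_ex_eq_some.1 hrr
    obtain ⟨i, rfl⟩ := hφv x (Finset.mem_insert_self ..)
    exact (ih hφ hφA fun y hy => hφv y (Finset.mem_insert_of_mem hy)).answers_ex hA hv hφ hx hφA
  | all x φ => cases hrr

end AlgebraExpressible

theorem Formula.exists_algebra_expression [Nonempty C] [DecidableEq V]
    {φ : Formula (folSig Rel ar C) V} (hfree : φ.freeVars = ∅) (hsafe : φ.SafeRange) :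
    ∃ (n : ℕ) (e : RA Rel ar C n), ∀ I : Inst Rel ar C,
      φ.Sat (folRep I) (fun _ => none) ↔ e.eval I ≠ ∅ := by
  let c : C := Classical.arbitrary C
  let v : Fin φ.allVars.card → V := fun i => φ.allVars.equivFin.symm i
  have hA := (AlgebraExpressible.cube_activeDomain φ).cube_union (.cube_singleton c)
  obtain ⟨e, he⟩ := hA.answers (v := v)
    (Subtype.val_injective.comp φ.allVars.equivFin.symm.injective) hsafe
    (fun I => Set.subset_union_left)
    fun x hx => ⟨φ.allVars.equivFin ⟨x, hx⟩, by simp [v]⟩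
  refine ⟨_, e, fun I => ?_⟩
  rw [he, ← Set.nonempty_iff_ne_empty]
  constructor
  · intro hsat
    exact ⟨fun _ => some c, fun _ => ⟨c, .inr rfl, rfl⟩,
      (sat_iff_of_freeVars_eq_empty _ hfree _ _).1 hsat⟩
  · rintro ⟨s, -, hsat⟩
    exact (sat_iff_of_freeVars_eq_empty _ hfree _ _).1 hsat

theorem extension_of_Codd_theorem_general {Rel C V : Type} {ar : Rel → ℕ} [Nonempty C]
    [DecidableEq V] [Infinite V] :
    (∀ (n : ℕ) (e : RA Rel ar C n) (t : Fin n → Option C),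
      ∃ φ : Formula (folSig Rel ar C) V,
        φ.freeVars = ∅ ∧ φ.SafeRange ∧
        ∀ I : Inst Rel ar C,
          (t ∈ RA.eval I e ↔ Formula.Sat (folRep I) (fun _ => none) φ)) ∧
    (∀ φ : Formula (folSig Rel ar C) V,
      φ.freeVars = ∅ → φ.SafeRange →
      ∃ (n : ℕ) (e : RA Rel ar C n), ∀ I : Inst Rel ar C,
        (Formula.Sat (folRep I) (fun _ => none) φ ↔ RA.eval I e ≠ ∅)) :=
  ⟨fun _ e t => e.exists_safeRange_formula V t, fun _ => Formula.exists_algebra_expression⟩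

/-- Extension of Codd's Theorem: the relational algebra with null values nRA
and the domain independent (safe-range) fragment of FOLe with the Standard
Name Assumption are equally expressive.
(i) For every nRA expression `e` of arity `n` and every `n`-tuple `t` over
`C ∪ {N}` there is a closed safe-range FOLe formula (namely `Ω(e,t)`) holding
in the FOLe representation of a database instance exactly when
`t ∈ eval_I(e)`; and (ii) for every safe-range closed FOLe formula `φ` there
is an nRA expression whose evaluation is nonempty exactly over the instances
whose FOLe representation satisfies `φ`. -/
theorem extension_of_Codd_theorem {Rel C : Type} {ar : Rel → ℕ} [Nonempty C] :
    (∀ (n : ℕ) (e : RA Rel ar C n) (t : Fin n → Option C),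
      ∃ φ : Formula (folSig Rel ar C) ℕ,
        φ.freeVars = ∅ ∧ φ.SafeRange ∧
        ∀ I : Inst Rel ar C,
          (t ∈ RA.eval I e ↔ Formula.Sat (folRep I) (fun _ => none) φ)) ∧
    (∀ φ : Formula (folSig Rel ar C) ℕ,
      φ.freeVars = ∅ → φ.SafeRange →
      ∃ (n : ℕ) (e : RA Rel ar C n), ∀ I : Inst Rel ar C,
        (Formula.Sat (folRep I) (fun _ => none) φ ↔ RA.eval I e ≠ ∅)) :=
  extension_of_Codd_theorem_general
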